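/- arXiv:2304.01109 — 7 statements merged into one kernel-verified Lean document; each statement's English description precedes it below -/
import Mathlib

section
/- Consider positive constants ρ_n, c, L, A, D (standard density, speed of sound, pipe length, cross-sectional area, diameter), a constant d ∈ ℝ, and time-dependent functions f_e(t) > 0 (effective friction factor) and p_M(t) > 0 (mean pressure). Suppose differentiable functions p_l, p_r, q_m : ℝ → ℝ and continuous inputs q_l, q_r : ℝ → ℝ satisfy the lumped pipeline dynamics: p_l' = (2ρ_n c²/(L A))·(q_l − q_m), p_r' = (2ρ_n c²/(L A))·(q_m − q_r), and (ρ_n L/A)·q_m' = p_l − p_r − R(t)·q_m − d, where R(t) = f_e(t)·ρ_n²·c²·L·|q_m(t)| / (2 D A² p_M(t)) ≥ 0. Then the Hamiltonian H(t) = (L A/(4 ρ_n c²))·(p_l(t)² + p_r(t)²) + (ρ_n L/(2A))·q_m(t)² satisfies, for all t, the power balance H'(t) = −R(t)·q_m(t)² + p_l(t)·q_l(t) − p_r(t)·q_r(t) − d·q_m(t), and in particular the passivity (dissipation) inequality H'(t) ≤ p_l(t)·q_l(t) − p_r(t)·q_r(t) − d·q_m(t). -/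
/-! Differentiating the quadratic Hamiltonian along a solution pairs each state with its
equation of motion, and the coefficients of the Hamiltonian are exactly those that undo the
coefficients of the dynamics. The exchange terms `± (pl - pr) * qm` between pressures and flow
then cancel (skew-symmetry of the interconnection), which leaves the supplied power minus the
friction loss `R * qm ^ 2`. The passivity inequality follows because `R` is nonnegative. -/

/-- Power balance and passivity of the third-order lumped pipeline
port-Hamiltonian model (Theorem 1 of the paper). -/
theorem pipeline_PHS_power_balance
    (ρn c L A D d : ℝ) (hρn : 0 < ρn) (hc : 0 < c) (hL : 0 < L)
    (hA : 0 < A) (hD : 0 < D)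
    (fe pM : ℝ → ℝ) (hfe : ∀ t, 0 < fe t) (hpM : ∀ t, 0 < pM t)
    (pl pr qm ql qr : ℝ → ℝ)
    (hpl : Differentiable ℝ pl) (hpr : Differentiable ℝ pr)
    (hqm : Differentiable ℝ qm)
    (hql : Continuous ql) (hqr : Continuous qr)
    (R : ℝ → ℝ)
    (hR : ∀ t, R t = fe t * ρn ^ 2 * c ^ 2 * L * |qm t| / (2 * D * A ^ 2 * pM t))
    (hdynl : ∀ t, deriv pl t = (2 * ρn * c ^ 2 / (L * A)) * (ql t - qm t))
    (hdynr : ∀ t, deriv pr t = (2 * ρn * c ^ 2 / (L * A)) * (qm t - qr t))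
    (hdynm : ∀ t, (ρn * L / A) * deriv qm t = pl t - pr t - R t * qm t - d)
    (H : ℝ → ℝ)
    (hH : ∀ t, H t = (L * A / (4 * ρn * c ^ 2)) * (pl t ^ 2 + pr t ^ 2) +
      (ρn * L / (2 * A)) * qm t ^ 2) :
    (∀ t, 0 ≤ R t) ∧
    (∀ t, deriv H t = -(R t * qm t ^ 2) + pl t * ql t - pr t * qr t - d * qm t) ∧
    (∀ t, deriv H t ≤ pl t * ql t - pr t * qr t - d * qm t) := by
  have hR0 : ∀ t, 0 ≤ R t := fun t => by
    have := hfe t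
    have := hpM t
    rw [hR t]
    positivity
  have hbal : ∀ t, deriv H t =
      -(R t * qm t ^ 2) + pl t * ql t - pr t * qr t - d * qm t := fun t => by
    have hder := ((((hpl t).hasDerivAt.pow 2).add ((hpr t).hasDerivAt.pow 2)).const_mul
      (L * A / (4 * ρn * c ^ 2))).add
      (((hqm t).hasDerivAt.pow 2).const_mul (ρn * L / (2 * A)))
    have hderH : HasDerivAt H _ t := hder.congr_of_eventuallyEq (.of_forall hH)
    rw [hderH.deriv, hdynl t, hdynr t]
    have hp : (L * A / (4 * ρn * c ^ 2)) * (2 * (2 * ρn * c ^ 2 / (L * A))) = 1 := by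
      field_simp
      norm_num
    have hq : (ρn * L / (2 * A)) * 2 = ρn * L / A := by
      field_simp
    norm_num
    linear_combination (pl t * (ql t - qm t) + pr t * (qm t - qr t)) * hp
      + qm t * deriv qm t * hq + qm t * hdynm t
  refine ⟨hR0, hbal, fun t => ?_⟩
  have := mul_nonneg (hR0 t) (sq_nonneg (qm t))
  linarith [hbal t]
end

section
/- Fix ε ∈ (0, 0.9] and define for Re > 7 the function s(Re) = (4.518/Re)·log₁₀(Re/7) + ε and the Hofer turbulent friction factor f_T(Re) = (2·log₁₀(s(Re)))⁻². Then f_T is strictly decreasing on [2300, ∞): for all 2300 ≤ Re₁ < Re₂ one has f_T(Re₂) < f_T(Re₁). -/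
/-!
The map `x ↦ log x / x` is strictly decreasing where `1 ≤ log x`, so `s` is strictly decreasing on
`[2300, ∞)`. Moreover `0 < s < 1` there: by monotonicity the upper bound only has to be checked at
`2300`, where `logb 10 (2300 / 7) < 3`. Hence `log s` is negative and strictly decreasing, its
square is strictly increasing, and the reciprocal of the square is strictly decreasing.
-/

/-- Strict version of `Real.log_div_self_antitoneOn`, rescaled to base `10` and argument `R / 7`. -/
theorem hofer_term_strict_anti {a b : ℝ} (ha : 2300 ≤ a) (hab : a < b) :
    (4.518 / b) * Real.logb 10 (b / 7) < (4.518 / a) * Real.logb 10 (a / 7) := by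
  have ha0 : 0 < a := by linarith
  have hb0 : 0 < b := by linarith
  have hlog10 : 0 < Real.log 10 := Real.log_pos (by norm_num)
  have h1 : 1 < Real.log (a / 7) := by
    rw [Real.lt_log_iff_exp_lt (by positivity)]
    linarith [Real.exp_one_lt_d9]
  have h2 : Real.log (b / 7) < Real.log (a / 7) + (b / a - 1) := by
    have h := Real.log_lt_sub_one_of_pos (x := b / a) (by positivity)
      ((one_lt_div ha0).2 hab).ne'
    have e : b / 7 = a / 7 * (b / a) := by field_simp
    rw [e, Real.log_mul (by positivity) (by positivity)]
    linarith
  have h3 : a * Real.log (b / 7) < b * Real.log (a / 7) := by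
    have h := mul_lt_mul_of_pos_left h2 ha0
    have e : a * (Real.log (a / 7) + (b / a - 1)) = a * Real.log (a / 7) + (b - a) := by
      field_simp
    nlinarith
  have h4 : a * Real.logb 10 (b / 7) < b * Real.logb 10 (a / 7) := by
    simp only [Real.logb, ← mul_div_assoc]
    exact div_lt_div_of_pos_right h3 hlog10
  rw [div_mul_eq_mul_div, div_mul_eq_mul_div, div_lt_div_iff₀ hb0 ha0]
  linarith

/-- The Hofer turbulent friction factor is strictly decreasing on `[2300, ∞)`
(Remark 4 of the paper). -/
theorem hofer_friction_strict_anti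
    (ε : ℝ) (hε : ε ∈ Set.Ioc (0 : ℝ) 0.9)
    (s fT : ℝ → ℝ)
    (hs : ∀ Re : ℝ, 7 < Re → s Re = (4.518 / Re) * Real.logb 10 (Re / 7) + ε)
    (hfT : ∀ Re : ℝ, 7 < Re → fT Re = ((2 * Real.logb 10 (s Re)) ^ 2)⁻¹) :
    ∀ Re₁ Re₂ : ℝ, 2300 ≤ Re₁ → Re₁ < Re₂ → fT Re₂ < fT Re₁ := by
  intro a b ha hab
  obtain ⟨hε0, hε1⟩ := hε
  have hsab : s b < s a := by
    rw [hs a (by linarith), hs b (by linarith)]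
    linarith [hofer_term_strict_anti ha hab]
  have hsb : 0 < s b := by
    rw [hs b (by linarith)]
    have : 0 < Real.logb 10 (b / 7) := Real.logb_pos (by norm_num) (by linarith)
    have : 0 < b := by linarith
    positivity
  have hsa : s a < 1 := by
    have h3 : Real.logb 10 (2300 / 7) < 3 := by
      rw [Real.logb_lt_iff_lt_rpow (by norm_num) (by norm_num)]
      norm_num
    have h : (4.518 / a) * Real.logb 10 (a / 7) ≤ (4.518 / 2300) * Real.logb 10 (2300 / 7) := by
      rcases ha.eq_or_lt with rfl | h
      · exact le_rfl
      · exact (hofer_term_strict_anti le_rfl h).le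
    rw [hs a (by linarith)]
    norm_num at *
    linarith
  have hla : Real.logb 10 (s a) < 0 := Real.logb_neg (by norm_num) (hsb.trans hsab) hsa
  have hlab : Real.logb 10 (s b) < Real.logb 10 (s a) :=
    Real.logb_lt_logb (by norm_num) hsb hsab
  rw [hfT a (by linarith), hfT b (by linarith)]
  apply inv_strictAnti₀
  · have : 2 * Real.logb 10 (s a) ≠ 0 := by linarith
    positivity
  · nlinarith
end

section
/- Fix ε ∈ (0, 0.9] and define for Re > 7 the function s(Re) = (4.518/Re)·log₁₀(Re/7) + ε and the Hofer turbulent friction factor f_T(Re) = (2·log₁₀(s(Re)))⁻². Then the map Re ↦ Re·f_T(Re) is strictly increasing on [2300, ∞): for all 2300 ≤ Re₁ < Re₂ one has Re₁·f_T(Re₁) < Re₂·f_T(Re₂). -/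
/-!
Write `a(x) = (4.518 / x) * logb 10 (x / 7)` and `L(x) = -log (a(x) + ε)`. Since `a ≤ 0.01` on
`[2300, ∞)` (`hofer_term_bounds`), `a + ε` lies in `(0, 0.91]` and `L > 0`, so the claim says that
`L(x) / √x` is strictly decreasing. With `x₂ = u² x₁`, `u > 1`, this reads `L(x₂) < u L(x₁)`
(`neg_log_lt_mul`). Besides these bounds, all that is needed about `a` is that `x * a(x)` is increasing, that is
`a(x₁) ≤ u² a(x₂)`. It bounds `L(x₂) - L(x₁) = log ((a₁ + ε) / (a₂ + ε))` by `2 log u`, which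
suffices if `L(x₁) ≥ 2`. If `L(x₁) < 2`, then `a₁ + ε` is at least `0.1`, so `ε` dominates `a₁`
and the logarithm is small because `a₁` is.
-/

lemma hofer_term_bounds {x : ℝ} (hx : 2300 ≤ x) :
    0 < (4.518 / x) * Real.logb 10 (x / 7) ∧ (4.518 / x) * Real.logb 10 (x / 7) ≤ 0.01 := by
  have hx0 : 0 < x := by linarith
  have hlog10 : 1 ≤ Real.log 10 := by
    rw [Real.le_log_iff_exp_le (by norm_num)]
    linarith [Real.exp_one_lt_d9]
  refine ⟨mul_pos (by positivity) (Real.logb_pos (by norm_num) (by linarith)), ?_⟩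
  -- the tangent line of `log` at `1000`, chosen because `logb 10 1000 = 3`
  have h1 : Real.log (x / 7) ≤ 3 * Real.log 10 + x / 7000 := by
    have h := Real.log_le_sub_one_of_pos (show 0 < x / 7 / 10 ^ 3 by positivity)
    rw [Real.log_div (by positivity) (by positivity), Real.log_pow] at h
    push_cast at h
    linarith
  have h2 : Real.logb 10 (x / 7) ≤ 3 + x / 7000 := by
    rw [Real.logb, div_le_iff₀ (by linarith)]
    nlinarith
  rw [div_mul_eq_mul_div, div_le_iff₀ hx0]
  linarith

/-- The growth estimate `L₂ < u L₁` for `Lᵢ = -log (aᵢ + ε)`, where `u` is the square root of the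
ratio of the two Reynolds numbers. -/
lemma neg_log_lt_mul {a₁ a₂ ε u : ℝ} (hε : 0 < ε) (hε' : ε ≤ 0.9) (ha₁ : 0 < a₁)
    (ha₁' : a₁ ≤ 0.01) (ha₂ : 0 < a₂) (hu : 1 < u) (h : a₁ ≤ u ^ 2 * a₂) :
    -Real.log (a₂ + ε) < u * -Real.log (a₁ + ε) := by
  have hu0 : 0 < u := by linarith
  have hs₁ : 0 < a₁ + ε := by linarith
  have hs₂ : 0 < a₂ + ε := by linarith
  rcases le_or_gt 2 (-Real.log (a₁ + ε)) with hL | hL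
  · have h1 : a₁ + ε < u ^ 2 * (a₂ + ε) := by
      nlinarith [mul_pos (sub_pos.mpr (one_lt_pow₀ hu two_ne_zero)) hε]
    have h2 := Real.log_lt_log hs₁ h1
    rw [Real.log_mul (by positivity) (by positivity), Real.log_pow] at h2
    push_cast at h2
    have h3 := Real.log_le_sub_one_of_pos hu0
    nlinarith
  · have hs : 0.1 ≤ a₁ + ε := by
      by_contra hcon
      have h1 := Real.log_lt_log hs₁ (not_le.mp hcon)
      have h2 : Real.log 0.1 ≤ -2 := by
        rw [Real.log_le_iff_le_exp (by norm_num), Real.exp_neg,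
          show (2 : ℝ) = 1 + 1 by norm_num, Real.exp_add]
        have he := Real.exp_one_lt_d9
        have hp := Real.exp_pos 1
        rw [show (0.1 : ℝ) = 10⁻¹ by norm_num]
        apply inv_anti₀ (by positivity)
        nlinarith
      linarith
    have hL1 : 0.09 ≤ -Real.log (a₁ + ε) := by
      linarith [Real.log_le_sub_one_of_pos hs₁]
    have hL2 : 1 - (a₁ + ε) ≤ -Real.log (a₁ + ε) := by
      linarith [Real.log_le_sub_one_of_pos hs₁]
    have hmain : 2 * a₁ < -Real.log (a₁ + ε) * ε := by
      have h1 : (1 - (a₁ + ε)) * ε ≤ -Real.log (a₁ + ε) * ε := by gcongr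
      nlinarith
    have hdiff : a₁ - a₂ ≤ 2 * a₁ * (u - 1) := by
      -- `a₂ ≥ a₁ / u²` and `1 - 1 / u² ≤ 2 * (u - 1)`
      have h1 : u ^ 2 * (a₁ - a₂) ≤ u ^ 2 * (2 * a₁ * (u - 1)) := by
        have h2 : u ^ 2 - 1 ≤ u ^ 2 * (2 * (u - 1)) := by
          nlinarith [mul_nonneg (sq_nonneg (u - 1)) (show 0 ≤ 2 * u + 1 by linarith)]
        nlinarith
      exact le_of_mul_le_mul_left h1 (by positivity)
    have hlog : Real.log (a₁ + ε) - Real.log (a₂ + ε) ≤ (a₁ - a₂) / (a₂ + ε) := by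
      have h1 := Real.log_le_sub_one_of_pos (div_pos hs₁ hs₂)
      rw [Real.log_div hs₁.ne' hs₂.ne'] at h1
      refine h1.trans (le_of_eq ?_)
      field_simp
      ring
    have hquot : (a₁ - a₂) / (a₂ + ε) < -Real.log (a₁ + ε) * (u - 1) := by
      rw [div_lt_iff₀ hs₂]
      have h1 := mul_lt_mul_of_pos_right hmain (sub_pos.mpr hu)
      have h2 : 0 < -Real.log (a₁ + ε) * (u - 1) * a₂ :=
        mul_pos (mul_pos (by linarith) (by linarith)) ha₂
      nlinarith
    linarith


/-- The map `Re ↦ Re · f_T(Re)` is strictly increasing on `[2300, ∞)`, so the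
resistive structure of the pipeline model increases monotonically with the
flow magnitude in the turbulent regime (Remark 4 of the paper). -/
theorem hofer_Re_mul_friction_strict_mono
    (ε : ℝ) (hε : ε ∈ Set.Ioc (0 : ℝ) 0.9)
    (s fT : ℝ → ℝ)
    (hs : ∀ Re : ℝ, 7 < Re → s Re = (4.518 / Re) * Real.logb 10 (Re / 7) + ε)
    (hfT : ∀ Re : ℝ, 7 < Re → fT Re = ((2 * Real.logb 10 (s Re)) ^ 2)⁻¹) :
    ∀ Re₁ Re₂ : ℝ, 2300 ≤ Re₁ → Re₁ < Re₂ → Re₁ * fT Re₁ < Re₂ * fT Re₂ := by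
  intro x y hx hxy
  obtain ⟨hε0, hε1⟩ := hε
  have hx0 : 0 < x := by linarith
  have hy0 : 0 < y := by linarith
  obtain ⟨ha, ha'⟩ := hofer_term_bounds hx
  obtain ⟨hb, hb'⟩ := hofer_term_bounds (hx.trans hxy.le)
  rw [hfT x (by linarith), hfT y (by linarith), hs x (by linarith), hs y (by linarith)]
  have hlogb : Real.logb 10 (x / 7) ≤ Real.logb 10 (y / 7) :=
    Real.logb_le_logb_of_le (by norm_num) (by positivity) (by linarith)
  have hu : 1 < √(y / x) := by
    rw [Real.lt_sqrt (by norm_num), lt_div_iff₀ hx0]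
    linarith
  have hu2 : √(y / x) ^ 2 = y / x := Real.sq_sqrt (by positivity)
  have hab : 4.518 / x * Real.logb 10 (x / 7)
      ≤ √(y / x) ^ 2 * (4.518 / y * Real.logb 10 (y / 7)) := by
    have h1 : y / x * (4.518 / y * Real.logb 10 (y / 7)) = 4.518 / x * Real.logb 10 (y / 7) := by
      field_simp
    rw [hu2, h1]
    gcongr
  have key := neg_log_lt_mul hε0 hε1 ha ha' hb hu hab
  set p := 4.518 / x * Real.logb 10 (x / 7) + ε with hp
  set q := 4.518 / y * Real.logb 10 (y / 7) + ε with hq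
  have hlp : Real.log p < 0 := Real.log_neg (by linarith) (by linarith)
  have hlq : Real.log q < 0 := Real.log_neg (by linarith) (by linarith)
  have hsq : x * Real.log q ^ 2 < y * Real.log p ^ 2 := by
    have h1 := pow_lt_pow_left₀ key (by linarith) two_ne_zero
    rw [mul_pow, hu2, neg_sq, neg_sq, div_mul_eq_mul_div, lt_div_iff₀ hx0] at h1
    linarith
  have hl10 : 0 < Real.log 10 := Real.log_pos (by norm_num)
  have hform : ∀ z r : ℝ, Real.log r ≠ 0 → z * ((2 * Real.logb 10 r) ^ 2)⁻¹
      = Real.log 10 ^ 2 / 4 * (z / Real.log r ^ 2) := by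
    intro z r hr
    rw [Real.logb]
    field_simp
    norm_num
  rw [hform x p hlp.ne, hform y q hlq.ne]
  refine mul_lt_mul_of_pos_left ?_ (by positivity)
  rw [div_lt_div_iff₀ (sq_pos_of_neg hlp) (sq_pos_of_neg hlq)]
  exact hsq
end

section
/- Fix ε ∈ (0, 0.9] and define for Re > 7 the function s(Re) = (4.518/Re)·log₁₀(Re/7) + ε and the Hofer turbulent friction factor f_T(Re) = (2·log₁₀(s(Re)))⁻². Then for every Re ≥ 2300, the turbulent friction factor dominates the laminar formula: f_T(Re) > 64/Re. -/
/-!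
The claim is equivalent to `0 < -log₁₀ s < √Re / 16`.

Since `Re / 7 ≥ 10²`, one has `s > 9 / Re`, so `-log₁₀ s < log₁₀ (Re / 9)`, which grows only
logarithmically; the tangent bound `log t ≤ t - 1` at `t = √Re / 48` (note `48² ≈ 2300`) shows it
stays below `√Re / 16`. The same tangent bound at `t = Re / 56` gives
`(4.518 / Re) * log₁₀ (Re / 7) < 0.1`, so `s < 1` because `ε ≤ 0.9`. This strict upper bound
makes `log₁₀ s` nonzero, so the inverse in the friction factor is not a junk value.
-/

theorem log_ten_gt : (2.3 : ℝ) < Real.log 10 := by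
  rw [Real.log_ten_eq]
  linarith [Real.log_two_gt_d9, Real.log_five_gt_d9]

theorem two_le_logb {R : ℝ} (hR : 2300 ≤ R) : 2 ≤ Real.logb 10 (R / 7) := by
  rw [Real.le_logb_iff_rpow_le (by norm_num) (by linarith)]
  norm_num
  linarith

theorem correction_lt {R : ℝ} (hR : 2300 ≤ R) :
    4.518 / R * Real.logb 10 (R / 7) < 0.1 := by
  have h10 := log_ten_gt
  have h1 : Real.log (R / 7) ≤ R / 56 - 1 + 3 * Real.log 2 := by
    have e : R / 7 = R / 56 * 2 ^ 3 := by ring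
    rw [e, Real.log_mul (by positivity) (by positivity), Real.log_pow]
    have := Real.log_le_sub_one_of_pos (show 0 < R / 56 by positivity)
    push_cast
    linarith
  have h2 := Real.log_two_lt_d9
  rw [Real.logb, div_mul_div_comm, div_lt_iff₀ (by positivity)]
  nlinarith

theorem log_div_nine_lt {R : ℝ} (hR : 2300 ≤ R) :
    Real.logb 10 (R / 9) < √R / 16 := by
  have h10 := log_ten_gt
  have hr : 47.9 ≤ √R := Real.le_sqrt_of_sq_le (by norm_num; linarith)
  have h1 : Real.log (R / 9) ≤ 2 * (√R / 48 - 1 + 4 * Real.log 2) := by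
    have e : R / 9 = (√R / 48 * 2 ^ 4) ^ 2 := by
      have := Real.sq_sqrt (show 0 ≤ R by linarith)
      ring_nf
      rw [this]
    rw [e, Real.log_pow, Real.log_mul (by positivity) (by positivity), Real.log_pow]
    have := Real.log_le_sub_one_of_pos (show 0 < √R / 48 by positivity)
    push_cast
    linarith
  have h2 := Real.log_two_lt_d9
  rw [Real.logb, div_lt_iff₀ (by positivity)]
  nlinarith

/-- For `Re ≥ 2300` the Hofer turbulent friction factor dominates the laminar
Hagen–Poiseuille formula: `f_T(Re) > 64/Re` (bound underlying Remark 5). -/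
theorem hofer_gt_laminar
    (ε : ℝ) (hε : ε ∈ Set.Ioc (0 : ℝ) 0.9)
    (s fT : ℝ → ℝ)
    (hs : ∀ Re : ℝ, 7 < Re → s Re = (4.518 / Re) * Real.logb 10 (Re / 7) + ε)
    (hfT : ∀ Re : ℝ, 7 < Re → fT Re = ((2 * Real.logb 10 (s Re)) ^ 2)⁻¹) :
    ∀ Re : ℝ, 2300 ≤ Re → 64 / Re < fT Re := by
  intro R hR
  obtain ⟨hε0, hε1⟩ := hε
  have hR0 : 0 < R := by linarith
  have hsR := hs R (by linarith)
  have hlow : (R / 9)⁻¹ < s R := by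
    have h : 4.518 / R * 2 ≤ 4.518 / R * Real.logb 10 (R / 7) :=
      mul_le_mul_of_nonneg_left (two_le_logb hR) (by positivity)
    have h' : (R / 9)⁻¹ ≤ 4.518 / R * 2 := by
      rw [inv_div, div_mul_eq_mul_div]
      gcongr
      norm_num
    linarith
  have hpos : 0 < s R := lt_trans (by positivity) hlow
  have hup : s R < 1 := by linarith [correction_lt hR]
  have hneg : Real.logb 10 (s R) < 0 := Real.logb_neg (by norm_num) hpos hup
  have hgt : -Real.logb 10 (R / 9) < Real.logb 10 (s R) := by
    rw [← Real.logb_inv]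
    exact Real.logb_lt_logb (by norm_num) (by positivity) hlow
  have hb := log_div_nine_lt hR
  have hsq := Real.sq_sqrt hR0.le
  rw [hfT R (by linarith), ← inv_div]
  apply inv_strictAnti₀
  · have : 2 * Real.logb 10 (s R) ≠ 0 := by linarith
    positivity
  · nlinarith
end

section
/- Let G be a finite undirected graph with n vertices and m edges and incidence matrix B ∈ ℝ^{n×m} (entries in {−1, 0, +1}, each column having exactly one +1 and one −1). Let C_i > 0 for each vertex i, let ρ_n, c > 0 and L_j, A_j > 0 for each edge j, let R_j(t) ≥ 0 and d_j ∈ ℝ for each edge j. Suppose differentiable functions p : ℝ → ℝⁿ (node pressures) and q : ℝ → ℝᵐ (edge flows) and continuous inputs u : ℝ → ℝⁿ (injected flows) satisfy C_i·p_i'(t) = u_i(t) − (B·q(t))_i for every vertex i and (ρ_n L_j/A_j)·q_j'(t) = −R_j(t)·q_j(t) + (Bᵀ·p(t))_j − d_j for every edge j. Then the network Hamiltonian H(t) = Σ_i ½·C_i·p_i(t)² + Σ_j ½·(ρ_n L_j/A_j)·q_j(t)² satisfies H'(t) = Σ_i p_i(t)·u_i(t) − Σ_j R_j(t)·q_j(t)²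 − Σ_j d_j·q_j(t), and in particular H'(t) ≤ Σ_i p_i(t)·u_i(t) − Σ_j d_j·q_j(t). -/
/-!
The quadratic Hamiltonian is differentiated term by term; substituting the nodal and edge
equations gives the supplied power `∑ pᵢ uᵢ`, the dissipation `∑ Rⱼ qⱼ²`, the gravity term
`∑ dⱼ qⱼ`, and two interconnection terms `∓ pᵀ B q`, which cancel because `[[0, -B], [Bᵀ, 0]]`
is skew-symmetric. Passivity follows since the dissipation is nonnegative.
-/

/-- Skew-symmetry of the interconnection: the power leaving the nodes through `B` is the power
entering the edges through `Bᵀ`. -/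
theorem sum_mulVec_eq_sum_transpose_mulVec {n m : ℕ} (B : Matrix (Fin n) (Fin m) ℝ)
    (x : Fin n → ℝ) (y : Fin m → ℝ) :
    ∑ i, x i * B.mulVec y i = ∑ j, y j * B.transpose.mulVec x j := by
  have h := Matrix.dotProduct_mulVec x B y
  rw [← Matrix.mulVec_transpose, dotProduct_comm (B.transpose.mulVec x)] at h
  exact h

theorem hasDerivAt_half_mul_sq {f : ℝ → ℝ} (hf : Differentiable ℝ f) (a t : ℝ) :
    HasDerivAt (fun τ => (1 / 2) * a * f τ ^ 2) (f t * (a * deriv f t)) t := by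
  have h := ((hf t).hasDerivAt.pow 2).const_mul ((1 / 2) * a)
  refine h.congr_deriv ?_
  norm_num
  ring

open Finset in
/-- Power balance and passivity of the gas network port-Hamiltonian model
(Theorem 2 of the paper): nodes carry capacitive pressure dynamics, edges carry
inductive-resistive flow dynamics, interconnected through the incidence
matrix `B`. -/
theorem gas_network_PHS_power_balance
    (n m : ℕ)
    (src snk : Fin m → Fin n) (hsrc_ne_snk : ∀ j, src j ≠ snk j)
    (B : Matrix (Fin n) (Fin m) ℝ)
    (hB : ∀ i j, B i j = if i = snk j then 1 else if i = src j then -1 else 0)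
    (C : Fin n → ℝ) (hC : ∀ i, 0 < C i)
    (ρn c : ℝ) (hρn : 0 < ρn) (hc : 0 < c)
    (L A : Fin m → ℝ) (hL : ∀ j, 0 < L j) (hA : ∀ j, 0 < A j)
    (R : ℝ → Fin m → ℝ) (hR : ∀ t j, 0 ≤ R t j)
    (d : Fin m → ℝ)
    (p : ℝ → Fin n → ℝ) (q : ℝ → Fin m → ℝ) (u : ℝ → Fin n → ℝ)
    (hp : ∀ i, Differentiable ℝ (fun t => p t i))
    (hq : ∀ j, Differentiable ℝ (fun t => q t j))
    (hu : ∀ i, Continuous (fun t => u t i))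
    (hnode : ∀ i t, C i * deriv (fun τ => p τ i) t = u t i - B.mulVec (q t) i)
    (hedge : ∀ j t, (ρn * L j / A j) * deriv (fun τ => q τ j) t =
      -(R t j * q t j) + B.transpose.mulVec (p t) j - d j)
    (H : ℝ → ℝ)
    (hH : ∀ t, H t = ∑ i, (1 / 2) * C i * p t i ^ 2 +
      ∑ j, (1 / 2) * (ρn * L j / A j) * q t j ^ 2) :
    (∀ t, deriv H t = ∑ i, p t i * u t i - ∑ j, R t j * q t j ^ 2 -
      ∑ j, d j * q t j) ∧
    (∀ t, deriv H t ≤ ∑ i, p t i * u t i - ∑ j, d j * q t j) := by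
  have balance : ∀ t, deriv H t = ∑ i, p t i * u t i - ∑ j, R t j * q t j ^ 2 -
      ∑ j, d j * q t j := by
    intro t
    have hH_eq : H = fun t => ∑ i, (1 / 2) * C i * p t i ^ 2 +
        ∑ j, (1 / 2) * (ρn * L j / A j) * q t j ^ 2 := funext hH
    have hderiv : HasDerivAt H (∑ i, p t i * (C i * deriv (fun τ => p τ i) t) +
        ∑ j, q t j * ((ρn * L j / A j) * deriv (fun τ => q τ j) t)) t := by
      rw [hH_eq]
      exact (HasDerivAt.fun_sum fun i _ => hasDerivAt_half_mul_sq (hp i) (C i) t).add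
        (HasDerivAt.fun_sum fun j _ => hasDerivAt_half_mul_sq (hq j) (ρn * L j / A j) t)
    have hnodes : ∑ i, p t i * (C i * deriv (fun τ => p τ i) t) =
        ∑ i, p t i * u t i - ∑ i, p t i * B.mulVec (q t) i := by
      rw [← Finset.sum_sub_distrib]
      refine Finset.sum_congr rfl fun i _ => ?_
      rw [hnode i t]
      ring
    have hedges : ∑ j, q t j * ((ρn * L j / A j) * deriv (fun τ => q τ j) t) =
        ∑ j, q t j * B.transpose.mulVec (p t) j - ∑ j, R t j * q t j ^ 2 -
          ∑ j, d j * q t j := by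
      rw [← Finset.sum_sub_distrib, ← Finset.sum_sub_distrib]
      refine Finset.sum_congr rfl fun j _ => ?_
      rw [hedge j t]
      ring
    rw [hderiv.deriv, hnodes, hedges, sum_mulVec_eq_sum_transpose_mulVec]
    ring
  refine ⟨balance, fun t => ?_⟩
  have hdiss : 0 ≤ ∑ j, R t j * q t j ^ 2 :=
    Finset.sum_nonneg fun j _ => mul_nonneg (hR t j) (sq_nonneg _)
  rw [balance t]
  linarith
end

section
/- For real numbers p_l > 0 and p_r > 0, define κ_l = (1/3)·(2 − p_r/(p_l + p_r)) and κ_r = (1/3)·(2 − p_l/(p_l + p_r)). Then (i) κ_l·p_l + κ_r·p_r = (2/3)·(p_l + p_r − p_l·p_r/(p_l + p_r)), i.e., this linear combination equals the Weymouth mean pressure p_M, and (ii) both κ_l and κ_r lie strictly in the open interval (1/3, 2/3). -/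
/-- Decomposition of the Weymouth mean pressure (equation (30) of the paper):
`κ_l·p_l + κ_r·p_r = p_M` with `κ_l, κ_r ∈ (1/3, 2/3)`. -/
theorem mean_pressure_decomposition
    (pl pr : ℝ) (hpl : 0 < pl) (hpr : 0 < pr)
    (κl κr : ℝ)
    (hκl : κl = (1 / 3) * (2 - pr / (pl + pr)))
    (hκr : κr = (1 / 3) * (2 - pl / (pl + pr))) :
    κl * pl + κr * pr = (2 / 3) * (pl + pr - pl * pr / (pl + pr)) ∧
    κl ∈ Set.Ioo (1 / 3 : ℝ) (2 / 3) ∧ κr ∈ Set.Ioo (1 / 3 : ℝ) (2 / 3) := by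
  have hs : 0 < pl + pr := add_pos hpl hpr
  have hl : 0 < pl / (pl + pr) := div_pos hpl hs
  have hr : 0 < pr / (pl + pr) := div_pos hpr hs
  -- The two pressure fractions sum to one, so each lies strictly between 0 and 1.
  have hsum : pl / (pl + pr) + pr / (pl + pr) = 1 := by
    rw [← add_div, div_self hs.ne']
  subst hκl hκr
  refine ⟨by ring, ⟨?_, ?_⟩, ?_, ?_⟩ <;> linarith
end

section
/- Let p_l > 0 and p_r > 0, set κ_l = (1/3)·(2 − p_r/(p_l + p_r)) and κ_r = (1/3)·(2 − p_l/(p_l + p_r)), let R > 0, and let φ ∈ ℝ satisfy |φ| ≤ 6. Then every (complex) eigenvalue of the real matrix A = [[0, 0, −1], [0, 0, 1], [1 − φ·κ_l, −1 − φ·κ_r, −R]] has real part ≤ 0. -/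
/-!
The characteristic polynomial of `A` is `μ (μ² + R μ + c)` with
`c = 2 - φ (κl - κr)`, and `κl - κr = (pl - pr) / (3 (pl + pr))` has absolute value below `1/3`.
Hence `|φ| ≤ 6` gives `c ≥ 0`, and a monic real quadratic with positive linear and nonnegative
constant coefficient has no root in the open right half-plane.
-/

/-- Degree-two Routh–Hurwitz criterion, in its non-strict form. -/
theorem re_nonpos_of_quadratic {R c : ℝ} (hR : 0 < R) (hc : 0 ≤ c) {μ : ℂ}
    (h : μ ^ 2 + R * μ + c = 0) : μ.re ≤ 0 := by
  by_contra! hx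
  have hre := congrArg Complex.re h
  have him := congrArg Complex.im h
  simp [pow_two] at hre him
  have hy : μ.im * (2 * μ.re + R) = 0 := by linarith
  -- The imaginary part of the equation forces `μ` to be real.
  have hy0 : μ.im = 0 := by
    rcases mul_eq_zero.mp hy with h0 | h0
    · exact h0
    · linarith
  rw [hy0] at hre
  nlinarith [mul_pos hx hx, mul_pos hR hx]

/-- Nonnegativity of the constant coefficient of the quadratic factor. -/
theorem constant_coeff_nonneg {pl pr κl κr φ : ℝ} (hpl : 0 < pl) (hpr : 0 < pr)
    (hκl : κl = (1 / 3) * (2 - pr / (pl + pr)))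
    (hκr : κr = (1 / 3) * (2 - pl / (pl + pr))) (hφ : |φ| ≤ 6) :
    0 ≤ 2 - φ * (κl - κr) := by
  have hs : 0 < pl + pr := by linarith
  have hd : |κl - κr| ≤ 1 / 3 := by
    have hl : 0 < pl / (pl + pr) := by positivity
    have hr : 0 < pr / (pl + pr) := by positivity
    have hsum : pl / (pl + pr) + pr / (pl + pr) = 1 := by field_simp
    rw [abs_le]
    constructor <;> linarith
  have hmul : |φ * (κl - κr)| ≤ 6 * (1 / 3) := by
    rw [abs_mul]
    gcongr
  linarith [le_abs_self (φ * (κl - κr))]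

/-- Appendix proposition of the paper: for positive end pressures, `R > 0` and
`|φ| ≤ 6`, every complex eigenvalue of the state matrix of the pipeline
dynamics with variable mean pressure has nonpositive real part. -/
theorem pipeline_variable_mean_pressure_stable
    (pl pr : ℝ) (hpl : 0 < pl) (hpr : 0 < pr)
    (κl κr : ℝ)
    (hκl : κl = (1 / 3) * (2 - pr / (pl + pr)))
    (hκr : κr = (1 / 3) * (2 - pl / (pl + pr)))
    (R : ℝ) (hR : 0 < R) (φ : ℝ) (hφ : |φ| ≤ 6)
    (A : Matrix (Fin 3) (Fin 3) ℝ)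
    (hA : A = !![0, 0, -1; 0, 0, 1; 1 - φ * κl, -1 - φ * κr, -R]) :
    ∀ μ : ℂ, μ ∈ spectrum ℂ (A.map (Complex.ofReal ·)) → μ.re ≤ 0 := by
  intro μ hμ
  have hc := constant_coeff_nonneg hpl hpr hκl hκr hφ
  rw [spectrum.mem_iff, Matrix.isUnit_iff_isUnit_det, isUnit_iff_ne_zero, not_not] at hμ
  have hfac : μ * (μ ^ 2 + R * μ + ((2 - φ * (κl - κr) : ℝ) : ℂ)) = 0 := by
    rw [← hμ, hA, Matrix.det_fin_three]
    simp [Matrix.algebraMap_matrix_apply]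
    ring
  rcases mul_eq_zero.mp hfac with h0 | hq
  · simp [h0]
  · exact re_nonpos_of_quadratic hR hc hq
end
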